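/- Let q be the Kronig–Penney potential, let n ≥ 1 satisfy Condition 1, let λ_n be a Dirichlet eigenvalue of L(q) with |λ_n − n²| ≤ M, and let Ψ_n be a corresponding eigenfunction with ∫₀^π |Ψ_n(x)|² dx = 1. Then R_m(λ_n) → 0 as m → ∞, where for m ≥ 1, R_m(λ_n) = Σ_{(n_1,…,n_m) ∈ ℤ^m} C_{n_1}⋯C_{n_m} · (∫₀^π q(x)Ψ_n(x) sin((n + n_1 + ⋯ + n_m)x) dx) / Π_{j=1}^m ( λ_n − (n + n_1 + ⋯ + n_j)² ), the sum restricted to indices with n_1 + ⋯ + n_s ∉ {0, −2n} for every s = 1,…,m. -/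

import Mathlib

open MeasureTheory Filter Asymptotics

/-- Cosine Fourier coefficients `C_k = (1/π) ∫₀^π q(x) cos(kx) dx` of a real potential. -/
noncomputable def cosCoefR (q : ℝ → ℝ) (k : ℤ) : ℝ :=
  (1 / Real.pi) * ∫ x in (0:ℝ)..Real.pi, q x * Real.cos ((k : ℝ) * x)

/-- `λ` is a Dirichlet eigenvalue of `L(q) = −d²/dx² + q` on `[0,π]` with eigenfunction `y`:
`y` is nontrivial, `y, y′` are absolutely continuous, `−y″ + q y = λ y` a.e. and
`y(0) = y(π) = 0`.  Absolute continuity and the a.e. differential equation are expressed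
in their equivalent integral form. -/
def IsDirichletEigenpair (q : ℝ → ℂ) (lam : ℂ) (y : ℝ → ℂ) : Prop :=
  ∃ g : ℝ → ℂ,
    (∃ x ∈ Set.Icc (0:ℝ) Real.pi, y x ≠ 0) ∧
    IntervalIntegrable g volume 0 Real.pi ∧
    IntervalIntegrable (fun t => (q t - lam) * y t) volume 0 Real.pi ∧
    (∀ x ∈ Set.Icc (0:ℝ) Real.pi, y x = y 0 + ∫ t in (0:ℝ)..x, g t) ∧
    (∀ x ∈ Set.Icc (0:ℝ) Real.pi, g x = g 0 + ∫ t in (0:ℝ)..x, (q t - lam) * y t) ∧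
    y 0 = 0 ∧ y Real.pi = 0

/-- `λ` is a Dirichlet eigenvalue of `L(q)` on `[0,π]`. -/
def IsDirichletEV (q : ℝ → ℂ) (lam : ℂ) : Prop :=
  ∃ y : ℝ → ℂ, IsDirichletEigenpair q lam y

/-- Condition 1 for the index `n`: `M ≤ 1/2` if `n = 1`, and `M < (2n−1)/2` if `n > 1`. -/
def Cond1 (M : ℝ) (n : ℕ) : Prop :=
  (n = 1 → M ≤ 1 / 2) ∧ (1 < n → M < (2 * (n : ℝ) - 1) / 2)

/-- The partial sum `n_1 + ⋯ + n_{j}` of the multi-index `v = (n_1, …, n_k)`. -/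
def psum {k : ℕ} (v : Fin k → ℤ) (j : Fin k) : ℤ :=
  ∑ i ∈ Finset.univ.filter (fun i => i ≤ j), v i

/-- Admissibility of a multi-index: every partial sum avoids `0` and `−2n`. -/
def adm (n : ℕ) {k : ℕ} (v : Fin k → ℤ) : Prop :=
  ∀ j : Fin k, psum v j ≠ 0 ∧ psum v j ≠ -(2 * (n : ℤ))

instance (n : ℕ) {k : ℕ} (v : Fin k → ℤ) : Decidable (adm n v) := by
  unfold adm; infer_instance

/-- The general term of `a_k(λ)`:
`C_{n_1}⋯C_{n_k}(C_{n_1+⋯+n_k} − C_{n_1+⋯+n_k+2n}) / Π_j (λ − (n+n_1+⋯+n_j)²)`. -/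
noncomputable def aTerm (C : ℤ → ℝ) (n : ℕ) (k : ℕ) (lam : ℝ) (v : Fin k → ℤ) : ℝ :=
  if adm n v then
    ((∏ i, C (v i)) * (C (∑ i, v i) - C ((∑ i, v i) + 2 * n))) /
      ∏ j, (lam - ((n : ℝ) + ((psum v j : ℤ) : ℝ))^2)
  else 0

/-- `a_k(λ)`, the full series over `ℤ^k` of admissible multi-indices. -/
noncomputable def aSum (C : ℤ → ℝ) (n k : ℕ) (lam : ℝ) : ℝ :=
  ∑' v : Fin k → ℤ, aTerm C n k lam v

/-- The truncated sum `a_{r,k,n}(λ)`, over multi-indices with entries in `[−r, r]`. -/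
noncomputable def aTrunc (C : ℤ → ℝ) (n k r : ℕ) (lam : ℝ) : ℝ :=
  ∑' v : Fin k → ℤ,
    if ∀ i, -(r : ℤ) ≤ v i ∧ v i ≤ (r : ℤ) then aTerm C n k lam v else 0

/-- `g_n(λ) = −C_{2n} + Σ_{k=1}^{s} a_{r,k,n}(λ)`. -/
noncomputable def gFun (C : ℤ → ℝ) (n r s : ℕ) (lam : ℝ) : ℝ :=
  -C (2 * n) + ∑ k ∈ Finset.Icc 1 s, aTrunc C n k r lam

/-- The general term of `R_m(λ)`:
`C_{n_1}⋯C_{n_m} (∫₀^π q Ψ sin((n+n_1+⋯+n_m)x) dx) / Π_j (λ − (n+n_1+⋯+n_j)²)`. -/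
noncomputable def Rterm (C : ℤ → ℝ) (q : ℝ → ℝ) (Psi : ℝ → ℂ) (n : ℕ) (lam : ℂ)
    (m : ℕ) (v : Fin m → ℤ) : ℂ :=
  if adm n v then
    ((∏ i, (C (v i) : ℂ)) *
        ∫ x in (0:ℝ)..Real.pi,
          (q x : ℂ) * Psi x * (Real.sin (((n : ℝ) + (((∑ i, v i) : ℤ) : ℝ)) * x) : ℂ)) /
      ∏ j, (lam - ((n : ℂ) + ((psum v j : ℤ) : ℂ))^2)
  else 0

/-- `R_m(λ)`, summed over admissible multi-indices in `ℤ^m`. -/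
noncomputable def Rsum (C : ℤ → ℝ) (q : ℝ → ℝ) (Psi : ℝ → ℂ) (n : ℕ) (lam : ℂ)
    (m : ℕ) : ℂ :=
  ∑' v : Fin m → ℤ, Rterm C q Psi n lam m v

/-! Read from right to left, the multi-index series `R_m` is an `m`-fold iterate: each summation
applies the Laurent matrix `(C_{j-k})`, and each denominator is an entry of the diagonal
`D(l) = (λ_n - l²)⁻¹`, set to zero at the excluded sites `l = ±n`. The Laurent matrix represents
multiplication by the even `2π`-periodic extension of `q`, so by Parseval's identity its `ℓ²`
operator norm is at most `M`.

For `n ≥ 2` the gap `|l² - n²| ≥ 2n - 1` gives `|D| ≤ (2n - 1 - M)⁻¹`, and Condition 1 makes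
`M |D| < 1` uniformly, so the iteration contracts in `ℓ²`. For `n = 1` and `M = 1/2` the bound on
`M |D|` reaches `1`, but only at the site `l = 0`; since `C_0 = 0` this site does not feed itself,
and the iteration contracts for a weighted `ℓ²` norm in which the other sites count more. -/

section EvenFunctions

theorem norm_fourier_apply {T : ℝ} (k : ℤ) (t : AddCircle T) : ‖fourier k t‖ = 1 := by
  rw [fourier_apply, Circle.norm_coe]

theorem map_abs_restrict_Ioc_neg_self {h : ℝ} (hh : 0 ≤ h) :
    (volume.restrict (Set.Ioc (-h) h)).map (fun x : ℝ => |x|) =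
      (2 : NNReal) • volume.restrict (Set.Ioc 0 h) := by
  have hsplit : Set.Ioc (-h) h = Set.Ioc (-h) 0 ∪ Set.Ioc 0 h :=
    (Set.Ioc_union_Ioc_eq_Ioc (neg_nonpos.2 hh) hh).symm
  have hdisj : Disjoint (Set.Ioc (-h) 0) (Set.Ioc 0 h) := by
    rw [Set.Ioc_disjoint_Ioc]; simp
  have hright : (volume.restrict (Set.Ioc 0 h)).map (fun x : ℝ => |x|) =
      volume.restrict (Set.Ioc 0 h) := by
    conv_rhs => rw [← Measure.map_id (μ := volume.restrict (Set.Ioc 0 h))]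
    exact Measure.map_congr
      ((ae_restrict_mem measurableSet_Ioc).mono fun x hx => abs_of_pos hx.1)
  have hleft : (volume.restrict (Set.Ioc (-h) 0)).map (fun x : ℝ => |x|) =
      volume.restrict (Set.Ioc 0 h) := by
    have hneg := (Measure.measurePreserving_neg (volume : Measure ℝ)).restrict_preimage
      (measurableSet_Ico (a := (0 : ℝ)) (b := h))
    rw [Set.neg_preimage, Set.neg_Ico, neg_zero] at hneg
    rw [← restrict_Ico_eq_restrict_Ioc (a := (0 : ℝ)), ← hneg.map_eq]
    exact Measure.map_congr
      ((ae_restrict_mem measurableSet_Ioc).mono fun x hx => abs_of_nonpos hx.2)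
  rw [hsplit, Measure.restrict_union hdisj measurableSet_Ioc,
    Measure.map_add _ _ measurable_abs, hleft, hright, two_smul]

variable {T : ℝ} [hT : Fact (0 < T)]

theorem measurePreserving_norm_addCircle :
    MeasurePreserving (fun t : AddCircle T => ‖t‖) volume
      ((2 : NNReal) • volume.restrict (Set.Ioc 0 (T / 2))) := by
  have hmk := AddCircle.measurePreserving_mk T (-(T / 2))
  have hT0 := hT.out
  rw [show -(T / 2) + T = T / 2 by ring] at hmk
  refine ⟨measurable_norm, ?_⟩
  rw [← hmk.map_eq, Measure.map_map measurable_norm hmk.measurable,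
    ← map_abs_restrict_Ioc_neg_self (half_pos hT0).le]
  refine Measure.map_congr ((ae_restrict_mem measurableSet_Ioc).mono fun x hx => ?_)
  exact (AddCircle.norm_coe_eq_abs_iff T hT0.ne').2 (by
    rw [abs_of_pos hT0]; exact abs_le.2 ⟨hx.1.le, hx.2⟩)

theorem ae_comp_norm {p : ℝ → Prop} (hp : ∀ᵐ x ∂volume.restrict (Set.Ioc 0 (T / 2)), p x) :
    ∀ᵐ t : AddCircle T, p ‖t‖ :=
  measurePreserving_norm_addCircle.quasiMeasurePreserving.ae (Measure.ae_smul_measure hp _)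

theorem fourier_add_fourier_neg (k : ℤ) (t : AddCircle T) :
    fourier k t + fourier (-k) t = 2 * Complex.cos (2 * Real.pi * k * ‖t‖ / T) := by
  have hT0 := hT.out
  obtain ⟨x, hx, rfl⟩ : ∃ x : ℝ, |x| ≤ T / 2 ∧ (x : AddCircle T) = t := by
    obtain ⟨x, hx, rfl⟩ := AddCircle.coe_image_Ioc_eq T (-(T / 2)) ▸ Set.mem_univ t
    exact ⟨x, abs_le.2 ⟨hx.1.le, by linarith [hx.2]⟩, rfl⟩
  rw [(AddCircle.norm_coe_eq_abs_iff T hT0.ne').2 (by rwa [abs_of_pos hT0]),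
    fourier_coe_apply, fourier_coe_apply]
  have habs : Complex.cos (2 * Real.pi * k * |x| / T) = Complex.cos (2 * Real.pi * k * x / T) := by
    rcases abs_choice x with h | h <;> simp [h, neg_div]
  rw [habs, Complex.two_cos]
  congr 2 <;> push_cast <;> ring

theorem integrable_comp_norm {f : ℝ → ℂ} (hf : IntervalIntegrable f volume 0 (T / 2)) :
    Integrable (fun t : AddCircle T => f ‖t‖) := by
  have hf' := (intervalIntegrable_iff_integrableOn_Ioc_of_le (half_pos hT.out).le).1 hf
  exact measurePreserving_norm_addCircle.integrable_comp_of_integrable hf'.smul_measure_nnreal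

theorem integral_comp_norm {f : ℝ → ℂ} (hf : IntervalIntegrable f volume 0 (T / 2)) :
    ∫ t : AddCircle T, f ‖t‖ = 2 * ∫ x in 0..T / 2, f x := by
  have hf' := (intervalIntegrable_iff_integrableOn_Ioc_of_le (half_pos hT.out).le).1 hf
  have hpush := measurePreserving_norm_addCircle (T := T)
  rw [intervalIntegral.integral_of_le (half_pos hT.out).le,
    ← integral_map (φ := fun t : AddCircle T => ‖t‖) hpush.aemeasurable
      (hpush.map_eq ▸ hf'.smul_measure_nnreal.aestronglyMeasurable),
    hpush.map_eq, integral_smul_nnreal_measure, NNReal.smul_def]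
  simp

theorem fourierCoeff_comp_norm {f : ℝ → ℂ} (hf : IntervalIntegrable f volume 0 (T / 2)) (k : ℤ) :
    fourierCoeff (fun t : AddCircle T => f ‖t‖) k =
      2 / T * ∫ x in 0..T / 2, f x * Complex.cos (2 * Real.pi * k * x / T) := by
  set F : ℤ → AddCircle T → ℂ := fun j t => fourier j t * f ‖t‖
  have hF (j : ℤ) : Integrable (F j) :=
    (integrable_comp_norm hf).bdd_mul (c := 1) (by fun_prop)
      (.of_forall fun t => (norm_fourier_apply j t).le)
  have hreflect : ∫ t, F k t = ∫ t, F (-k) t := by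
    rw [← integral_neg_eq_self]
    simp [F]
  have hcos : 2 * ∫ t, F (-k) t =
      2 * ∫ t : AddCircle T, f ‖t‖ * Complex.cos (2 * Real.pi * k * ‖t‖ / T) := by
    rw [two_mul]
    nth_rw 1 [← hreflect]
    rw [← integral_add (hF k) (hF (-k)), ← integral_const_mul]
    refine integral_congr_ae (.of_forall fun t => ?_)
    simp only [F, ← add_mul, fourier_add_fourier_neg]
    ring
  have hfcos : IntervalIntegrable
      (fun x : ℝ => f x * Complex.cos (2 * Real.pi * k * x / T)) volume 0 (T / 2) :=
    hf.mul_continuousOn (by fun_prop)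
  rw [fourierCoeff, AddCircle.integral_haarAddCircle]
  simp only [smul_eq_mul]
  rw [show ∫ t : AddCircle T, fourier (-k) t * f ‖t‖ = _ from mul_left_cancel₀ two_ne_zero hcos,
    integral_comp_norm hfcos, Complex.real_smul]
  push_cast
  ring

end EvenFunctions

section LaurentOperator

/-- The squared `ℓ²` norm of a two-sided sequence. -/
noncomputable def energy (u : ℤ → ℂ) : ℝ := ∑' l, ‖u l‖ ^ 2

/-- The Laurent operator with symbol coefficients `c`, i.e. convolution by `c` on `ℤ`. -/
noncomputable def laurent (c u : ℤ → ℂ) (j : ℤ) : ℂ := ∑' k, u k * c (j - k)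

/-- `B` bounds the `ℓ²` operator norm of the Laurent operator of `c`. Testing on absolutely
summable sequences is enough for our purposes and keeps the defining series convergent. -/
def IsLaurentBound (c : ℤ → ℂ) (B : ℝ) : Prop :=
  ∀ u : ℤ → ℂ, Summable (fun l => ‖u l‖) →
    Summable (fun l => ‖laurent c u l‖ ^ 2) ∧ energy (laurent c u) ≤ B ^ 2 * energy u

theorem summable_sq_norm {u : ℤ → ℂ} (hu : Summable fun l => ‖u l‖) :
    Summable fun l => ‖u l‖ ^ 2 := by
  simp_rw [sq]
  exact (hu.mul_of_nonneg hu (fun _ => norm_nonneg _) fun _ => norm_nonneg _).comp_injective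
    (i := fun l => (l, l)) fun _ _ h => (Prod.ext_iff.1 h).1

theorem IsLaurentBound.norm_le {c : ℤ → ℂ} {B : ℝ} (hc : IsLaurentBound c B) (hB : 0 ≤ B)
    (k : ℤ) : ‖c k‖ ≤ B := by
  have hdelta (f : ℂ → ℝ) (hf : f 0 = 0) (l : ℤ) (hl : l ≠ 0) :
      f (Pi.single (M := fun _ : ℤ => ℂ) 0 1 l) = 0 := by
    rw [Pi.single_eq_of_ne hl, hf]
  have hlaurent : laurent c (Pi.single 0 1) = c := by
    funext j
    rw [laurent, tsum_eq_single 0 fun l hl => by rw [Pi.single_eq_of_ne hl, zero_mul]]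
    simp
  have henergy : energy (Pi.single 0 1) = 1 := by
    rw [energy, tsum_eq_single 0 (hdelta (‖·‖ ^ 2) (by simp))]
    simp
  obtain ⟨hsum, hle⟩ := hc (Pi.single 0 1)
    (summable_of_ne_finset_zero (s := {0}) fun l hl => hdelta (‖·‖) norm_zero l (by simpa using hl))
  rw [hlaurent, henergy, mul_one] at hle
  rw [hlaurent] at hsum
  exact le_of_sq_le_sq ((hsum.le_tsum k fun _ _ => sq_nonneg _).trans hle) hB

/-- The absolutely convergent trigonometric series with coefficients `u`. -/
noncomputable def trigSeries {T : ℝ} (u : ℤ → ℂ) (t : AddCircle T) : ℂ := ∑' k, u k * fourier k t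

theorem continuous_trigSeries {T : ℝ} {u : ℤ → ℂ} (hu : Summable fun k => ‖u k‖) :
    Continuous (trigSeries (T := T) u) :=
  continuous_tsum (fun _ => by fun_prop) hu fun k t => by
    rw [norm_mul, norm_fourier_apply, mul_one]

variable {T : ℝ} [hT : Fact (0 < T)]

theorem fourierCoeff_mul_trigSeries {g : AddCircle T → ℂ}
    (hg : Integrable g AddCircle.haarAddCircle) {u : ℤ → ℂ} (hu : Summable fun k => ‖u k‖) :
    fourierCoeff (fun t => g t * trigSeries u t) = laurent (fourierCoeff g) u := by
  funext j
  set F : ℤ → AddCircle T → ℂ := fun k t => u k * (fourier (-(j - k)) t • g t)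
  have hF (k : ℤ) : Integrable (F k) AddCircle.haarAddCircle := (hg.fourier_smul _).const_mul _
  have hFnorm (k : ℤ) : ∫ t, ‖F k t‖ ∂AddCircle.haarAddCircle =
      ‖u k‖ * ∫ t, ‖g t‖ ∂AddCircle.haarAddCircle := by
    simp only [F, norm_mul, norm_smul, norm_fourier_apply, one_mul, integral_const_mul]
  have hswap := integral_tsum_of_summable_integral_norm hF
    (by simpa only [hFnorm] using hu.mul_right _)
  simp only [F, integral_const_mul] at hswap
  rw [laurent]
  refine Eq.trans (integral_congr_ae (.of_forall fun t => ?_)) hswap.symm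
  dsimp only
  rw [trigSeries, ← tsum_mul_left, smul_eq_mul, ← tsum_mul_left]
  refine tsum_congr fun k => ?_
  rw [neg_sub, sub_eq_add_neg, fourier_add, smul_eq_mul]
  ring

theorem fourierCoeff_trigSeries {u : ℤ → ℂ} (hu : Summable fun k => ‖u k‖) :
    fourierCoeff (trigSeries (T := T) u) = u := by
  have hone : fourierCoeff (fun _ : AddCircle T => (1 : ℂ)) = Pi.single 0 1 := by
    rw [← fourierCoeff_fourier (T := T) 0]
    congr 1
    funext t
    exact fourier_zero.symm
  have hmul := fourierCoeff_mul_trigSeries (T := T) (integrable_const (1 : ℂ)) hu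
  simp only [one_mul] at hmul
  rw [hmul, hone]
  funext j
  rw [laurent, tsum_eq_single j fun k hk => by
    rw [Pi.single_eq_of_ne (sub_ne_zero.2 hk.symm), mul_zero]]
  simp

theorem hasSum_sq_norm_fourierCoeff {f : AddCircle T → ℂ}
    (hf : MemLp f 2 AddCircle.haarAddCircle) :
    HasSum (fun k => ‖fourierCoeff f k‖ ^ 2) (∫ t, ‖f t‖ ^ 2 ∂AddCircle.haarAddCircle) := by
  convert hasSum_sq_fourierCoeff hf.toLp using 1
  · rw [fourierCoeff_congr_ae hf.coeFn_toLp]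
  · exact integral_congr_ae (hf.coeFn_toLp.mono fun t ht => by simp only [ht])

/-- Multiplication by `g` has `L²` operator norm at most `‖g‖_∞`, and Parseval's identity carries
it to the Laurent operator. -/
theorem isLaurentBound_fourierCoeff {g : AddCircle T → ℂ} {B : ℝ}
    (hg : AEStronglyMeasurable g AddCircle.haarAddCircle)
    (hB : ∀ᵐ t ∂AddCircle.haarAddCircle, ‖g t‖ ≤ B) : IsLaurentBound (fourierCoeff g) B := by
  intro u hu
  set U : AddCircle T → ℂ := trigSeries u
  have hU : MemLp U 2 AddCircle.haarAddCircle :=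
    (continuous_trigSeries hu).memLp_of_hasCompactSupport (.of_compactSpace _)
  have hgU : MemLp (fun t => g t * U t) 2 AddCircle.haarAddCircle :=
    hU.of_le_mul (hg.mul hU.1) (hB.mono fun t ht => by rw [norm_mul]; gcongr)
  have hparseval := hasSum_sq_norm_fourierCoeff hgU
  have hparsevalU := hasSum_sq_norm_fourierCoeff hU
  rw [fourierCoeff_mul_trigSeries (.of_bound hg B hB) hu] at hparseval
  rw [fourierCoeff_trigSeries hu] at hparsevalU
  refine ⟨hparseval.summable, ?_⟩
  rw [energy, energy, hparseval.tsum_eq, hparsevalU.tsum_eq, ← integral_const_mul]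
  refine integral_mono_ae (hgU.integrable_norm_pow two_ne_zero)
    ((hU.integrable_norm_pow two_ne_zero).const_mul _) ?_
  filter_upwards [hB] with t ht
  rw [norm_mul, mul_pow]
  gcongr

end LaurentOperator

section EvenExtension

variable {q : ℝ → ℝ}

local instance : Fact ((0 : ℝ) < 2 * Real.pi) := ⟨Real.two_pi_pos⟩

/-- The even `2π`-periodic extension of `q : [0, π] → ℝ`: on the circle of length `2π` the norm of
a point is the absolute value of its representative in `(-π, π]`. -/
noncomputable def evenExt (q : ℝ → ℝ) (t : AddCircle (2 * Real.pi)) : ℂ := q ‖t‖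

theorem intervalIntegrable_ofReal {a b : ℝ} (hq : IntervalIntegrable q volume a b) :
    IntervalIntegrable (fun x => (q x : ℂ)) volume a b :=
  ⟨hq.1.ofReal, hq.2.ofReal⟩

theorem aestronglyMeasurable_evenExt (hq : IntervalIntegrable q volume 0 Real.pi) :
    AEStronglyMeasurable (evenExt q) := by
  rw [← mul_div_cancel_left₀ Real.pi two_ne_zero] at hq
  exact (integrable_comp_norm (intervalIntegrable_ofReal hq)).aestronglyMeasurable

theorem norm_evenExt_le {M : ℝ} (hM : ∀ᵐ x ∂volume.restrict (Set.Ioc 0 Real.pi), |q x| ≤ M) :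
    ∀ᵐ t, ‖evenExt q t‖ ≤ M := by
  rw [← mul_div_cancel_left₀ Real.pi two_ne_zero] at hM
  filter_upwards [ae_comp_norm hM] with t ht
  rwa [evenExt, Complex.norm_real]

theorem fourierCoeff_evenExt (hq : IntervalIntegrable q volume 0 Real.pi) (k : ℤ) :
    fourierCoeff (evenExt q) k = cosCoefR q k := by
  rw [← mul_div_cancel_left₀ Real.pi two_ne_zero] at hq
  refine (fourierCoeff_comp_norm (intervalIntegrable_ofReal hq) k).trans ?_
  rw [mul_div_cancel_left₀ Real.pi two_ne_zero, cosCoefR]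
  push_cast [← intervalIntegral.integral_ofReal]
  congr 1
  · field_simp
  · refine intervalIntegral.integral_congr fun x _ => ?_
    congr 2
    field_simp

theorem isLaurentBound_cosCoefR {M : ℝ} (hq : IntervalIntegrable q volume 0 Real.pi)
    (hqM : ∀ᵐ x ∂volume.restrict (Set.Ioc 0 Real.pi), |q x| ≤ M) :
    IsLaurentBound (fun k => (cosCoefR q k : ℂ)) M := by
  have hac : AddCircle.haarAddCircle ≪ (volume : Measure (AddCircle (2 * Real.pi))) :=
    Measure.absolutelyContinuous_smul (by simp [Real.pi_pos])
  rw [← funext (fourierCoeff_evenExt hq)]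
  exact isLaurentBound_fourierCoeff ((aestronglyMeasurable_evenExt hq).mono_ac hac)
    (hac.ae_le (norm_evenExt_le hqM))

theorem cosCoefR_even (q : ℝ → ℝ) : (cosCoefR q).Even := fun k => by
  simp only [cosCoefR, Int.cast_neg, neg_mul, Real.cos_neg]

theorem cosCoefR_zero (q : ℝ → ℝ) : cosCoefR q 0 = 1 / Real.pi * ∫ x in 0..Real.pi, q x := by
  simp [cosCoefR]

end EvenExtension

section PathSums

theorem psum_cons_zero {m : ℕ} (k : ℤ) (v : Fin m → ℤ) :
    psum (Fin.cons k v : Fin (m + 1) → ℤ) 0 = k := by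
  simp [psum, Finset.sum_filter]

theorem psum_cons_succ {m : ℕ} (k : ℤ) (v : Fin m → ℤ) (i : Fin m) :
    psum (Fin.cons k v : Fin (m + 1) → ℤ) i.succ = k + psum v i := by
  simp [psum, Finset.sum_filter, Fin.sum_univ_succ]

/-- The contribution to an iterated series of the path on `ℤ` that starts at `j` and has steps `v`:
a factor `C` for every step, `D` for every site reached and `W` for the endpoint. -/
noncomputable def pathTerm (C D W : ℤ → ℂ) (j : ℤ) {m : ℕ} (v : Fin m → ℤ) : ℂ :=
  (∏ i, C (v i) * D (j + psum v i)) * W (j + ∑ i, v i)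

/-- The bijection that assembles a path of length `m + 1` from its first step and the rest. -/
def pathCons (m : ℕ) : ℤ × (Fin m → ℤ) ≃ (Fin (m + 1) → ℤ) := Fin.consEquiv fun _ => ℤ

variable {C D W : ℤ → ℂ}

theorem pathTerm_pathCons (j : ℤ) {m : ℕ} (p : ℤ × (Fin m → ℤ)) :
    pathTerm C D W j (pathCons m p) =
      C p.1 * D (j + p.1) * pathTerm C D W (j + p.1) p.2 := by
  rw [show pathCons m p = Fin.cons p.1 p.2 from rfl]
  simp only [pathTerm, Fin.prod_univ_succ, Fin.sum_univ_succ, psum_cons_zero, psum_cons_succ,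
    Fin.cons_zero, Fin.cons_succ, add_assoc, mul_assoc]

theorem tsum_pathTerm_succ {m : ℕ} {j : ℤ}
    (hsum : Summable fun v : Fin (m + 1) → ℤ => pathTerm C D W j v) :
    ∑' v : Fin (m + 1) → ℤ, pathTerm C D W j v =
      ∑' k, C k * D (j + k) * ∑' v : Fin m → ℤ, pathTerm C D W (j + k) v := by
  rw [← (pathCons m).summable_iff] at hsum
  rw [← (pathCons m).tsum_eq]
  refine hsum.tsum_prod.trans ?_
  simp only [Function.comp_apply, pathTerm_pathCons, tsum_mul_left]

variable {B K : ℝ}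

theorem summable_norm_pathTerm (hC : ∀ k, ‖C k‖ ≤ B) (hD : Summable fun l => ‖D l‖)
    (hW : ∀ l, ‖W l‖ ≤ K) (m : ℕ) (j : ℤ) :
    Summable (fun v : Fin m → ℤ => ‖pathTerm C D W j v‖) ∧
      ∑' v : Fin m → ℤ, ‖pathTerm C D W j v‖ ≤ (B * ∑' l, ‖D l‖) ^ m * K := by
  induction m generalizing j with
  | zero => exact ⟨.of_finite, by simpa [pathTerm] using hW j⟩
  | succ m ih =>
    set S := ∑' l, ‖D l‖
    set f : ℤ × (Fin m → ℤ) → ℝ := fun p => ‖pathTerm C D W j (pathCons m p)‖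
    have hf (k : ℤ) (v : Fin m → ℤ) :
        f (k, v) = ‖C k‖ * ‖D (j + k)‖ * ‖pathTerm C D W (j + k) v‖ := by
      simp only [f, pathTerm_pathCons, norm_mul]
    have hfiber (k : ℤ) : ∑' v, f (k, v) ≤ ‖D (j + k)‖ * (B * ((B * S) ^ m * K)) := by
      have hB : 0 ≤ B := (norm_nonneg _).trans (hC k)
      simp only [hf, tsum_mul_left]
      calc _ ≤ B * ‖D (j + k)‖ * ((B * S) ^ m * K) := by
            gcongr
            exacts [hC k, (ih _).2]
        _ = _ := by ring
    have hshift : Summable fun k => ‖D (j + k)‖ * (B * ((B * S) ^ m * K)) :=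
      (hD.comp_injective (add_right_injective j)).mul_right _
    have houter : Summable fun k => ∑' v, f (k, v) :=
      .of_nonneg_of_le (fun k => tsum_nonneg fun v => norm_nonneg _) hfiber hshift
    have hsum : Summable f := (summable_prod_of_nonneg fun p => norm_nonneg _).2
      ⟨fun k => ((ih (j + k)).1.mul_left _).congr fun v => (hf k v).symm, houter⟩
    refine ⟨(pathCons m).summable_iff.1 hsum, ?_⟩
    calc ∑' v, ‖pathTerm C D W j v‖ = ∑' k, ∑' v, f (k, v) := by
          rw [← (pathCons m).tsum_eq, ← hsum.tsum_prod]
      _ ≤ ∑' k, ‖D (j + k)‖ * (B * ((B * S) ^ m * K)) := houter.tsum_le_tsum hfiber hshift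
      _ = (B * S) ^ (m + 1) * K := by
          rw [tsum_mul_right, show ∑' k, ‖D (j + k)‖ = S from (Equiv.addLeft j).tsum_eq (‖D ·‖)]
          ring

theorem tsum_pathTerm_eq_iterate (hC : ∀ k, ‖C k‖ ≤ B) (hCeven : C.Even)
    (hD : Summable fun l => ‖D l‖) (hW : ∀ l, ‖W l‖ ≤ K) (m : ℕ) (j : ℤ) :
    ∑' v : Fin m → ℤ, pathTerm C D W j v = (fun w => laurent C (D * w))^[m] W j := by
  induction m generalizing j with
  | zero => simp [pathTerm]
  | succ m ih =>
    rw [tsum_pathTerm_succ (summable_norm_pathTerm hC hD hW (m + 1) j).1.of_norm,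
      Function.iterate_succ_apply']
    refine .trans (tsum_congr fun k => ?_) ((Equiv.addLeft j).tsum_eq _)
    rw [ih, Equiv.coe_addLeft, sub_add_cancel_left, hCeven k, Pi.mul_apply]
    ring

end PathSums

section Contraction

theorem energy_nonneg (u : ℤ → ℂ) : 0 ≤ energy u := tsum_nonneg fun _ => sq_nonneg _

theorem sq_norm_le_energy {u : ℤ → ℂ} (hu : Summable fun l => ‖u l‖ ^ 2) (l : ℤ) :
    ‖u l‖ ^ 2 ≤ energy u :=
  hu.le_tsum l fun _ _ => sq_nonneg _

theorem energy_le_of_norm_le {u v : ℤ → ℂ} {δ : ℝ} (hv : Summable fun l => ‖v l‖ ^ 2)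
    (huv : ∀ l, ‖u l‖ ≤ δ * ‖v l‖) : energy u ≤ δ ^ 2 * energy v := by
  have hsq (l : ℤ) : ‖u l‖ ^ 2 ≤ δ ^ 2 * ‖v l‖ ^ 2 := by
    rw [← mul_pow]
    exact pow_le_pow_left₀ (norm_nonneg _) (huv l) 2
  rw [energy, energy, ← tsum_mul_left]
  exact (Summable.of_nonneg_of_le (fun _ => sq_nonneg _) hsq (hv.mul_left _)).tsum_le_tsum hsq
    (hv.mul_left _)

theorem energy_eq_update_add {u : ℤ → ℂ} (hu : Summable fun l => ‖u l‖ ^ 2) (p : ℤ) :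
    energy u = energy (Function.update u p 0) + ‖u p‖ ^ 2 := by
  rw [energy, hu.tsum_eq_add_tsum_ite p, add_comm, energy]
  congr 1
  refine tsum_congr fun l => ?_
  by_cases hl : l = p <;> simp [hl]

theorem tendsto_energy_of_le_mul {N : (ℤ → ℂ) → ℝ} {u : ℕ → ℤ → ℂ} {r : ℝ} (hr0 : 0 ≤ r)
    (hr1 : r < 1) (hN : ∀ m, energy (u m) ≤ N (u m)) (hstep : ∀ m, N (u (m + 1)) ≤ r * N (u m)) :
    Tendsto (fun m => energy (u m)) atTop (nhds 0) := by
  have hgeom (m : ℕ) : energy (u m) ≤ r ^ m * N (u 0) :=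
    (hN m).trans (le_geom (u := fun m => N (u m)) hr0 m fun k _ => hstep k)
  refine squeeze_zero (fun m => energy_nonneg _) hgeom ?_
  simpa using (tendsto_pow_atTop_nhds_zero_of_lt_one hr0 hr1).mul_const (N (u 0))

/-- Iterating the operator `u ↦ D * laurent c u` drives every sequence to zero in `ℓ²`. -/
def IterationDecays (c D : ℤ → ℂ) : Prop :=
  ∀ u : ℕ → ℤ → ℂ, (∀ m, Summable fun l => ‖u m l‖) →
    (∀ m, u (m + 1) = D * laurent c (u m)) → Tendsto (fun m => energy (u m)) atTop (nhds 0)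

variable {c D : ℤ → ℂ} {B δ : ℝ}

theorem iterationDecays_of_norm_le (hc : IsLaurentBound c B) (hD : ∀ l, ‖D l‖ ≤ δ)
    (hδB : (δ * B) ^ 2 < 1) : IterationDecays c D := by
  intro u hu hstep
  refine tendsto_energy_of_le_mul (sq_nonneg _) hδB (fun _ => le_rfl) fun m => ?_
  obtain ⟨hsum, hle⟩ := hc (u m) (hu m)
  calc energy (u (m + 1)) ≤ δ ^ 2 * energy (laurent c (u m)) :=
        energy_le_of_norm_le hsum fun l => by
          rw [hstep, Pi.mul_apply, norm_mul]
          gcongr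
          exact hD l
    _ ≤ δ ^ 2 * (B ^ 2 * energy (u m)) := by gcongr
    _ = (δ * B) ^ 2 * energy (u m) := by ring

/-- If the symbol has mean zero, a site does not feed itself. -/
theorem sq_norm_laurent_apply_le (hc : IsLaurentBound c B) (hc0 : c 0 = 0) {w : ℤ → ℂ}
    (hw : Summable fun l => ‖w l‖) (p : ℤ) :
    ‖laurent c w p‖ ^ 2 ≤ B ^ 2 * energy (Function.update w p 0) := by
  have hlaurent : laurent c w p = laurent c (Function.update w p 0) p := by
    refine tsum_congr fun k => ?_
    by_cases hk : k = p <;> simp [hk, hc0]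
  have hupdate : Summable fun l => ‖Function.update w p 0 l‖ := by
    refine .of_nonneg_of_le (fun _ => norm_nonneg _) (fun l => ?_) hw
    by_cases hl : l = p <;> simp [hl]
  obtain ⟨hsum, hle⟩ := hc _ hupdate
  rw [hlaurent]
  exact (sq_norm_le_energy hsum p).trans hle

/-- The squared `ℓ²` norm with weight `1` at the site `p` and weight `ω` at all other sites. -/
noncomputable def siteEnergy (p : ℤ) (ω : ℝ) (u : ℤ → ℂ) : ℝ :=
  ω * energy (Function.update u p 0) + ‖u p‖ ^ 2

theorem energy_le_siteEnergy {p : ℤ} {ω : ℝ} (hω : 1 ≤ ω) {w : ℤ → ℂ}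
    (hw : Summable fun l => ‖w l‖ ^ 2) : energy w ≤ siteEnergy p ω w := by
  rw [energy_eq_update_add hw p, siteEnergy]
  gcongr
  exact le_mul_of_one_le_left (energy_nonneg _) hω

variable {p : ℤ} {ε : ℝ}

theorem siteEnergy_mul_laurent_le (hc : IsLaurentBound c B) (hc0 : c 0 = 0)
    (hDp : ‖D p‖ ≤ ε) (hD : ∀ l ≠ p, ‖D l‖ ≤ δ) {ω : ℝ} (hω : 0 ≤ ω) {w : ℤ → ℂ}
    (hw : Summable fun l => ‖w l‖) :
    siteEnergy p ω (D * laurent c w) ≤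
      ω * (δ * B) ^ 2 * energy w + (ε * B) ^ 2 * energy (Function.update w p 0) := by
  obtain ⟨hsum, hle⟩ := hc w hw
  have hδ : 0 ≤ δ := (norm_nonneg _).trans (hD (p + 1) (by simp))
  have hoff : energy (Function.update (D * laurent c w) p 0) ≤ (δ * B) ^ 2 * energy w := by
    rw [mul_pow, mul_assoc]
    refine (energy_le_of_norm_le hsum fun l => ?_).trans
      (mul_le_mul_of_nonneg_left hle (sq_nonneg δ))
    by_cases hl : l = p
    · rw [hl, Function.update_self, norm_zero]
      positivity
    · rw [Function.update_of_ne hl, Pi.mul_apply, norm_mul]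
      gcongr
      exact hD l hl
  have hsite : ‖(D * laurent c w) p‖ ^ 2 ≤ (ε * B) ^ 2 * energy (Function.update w p 0) := by
    rw [Pi.mul_apply, norm_mul, mul_pow, mul_pow, mul_assoc]
    gcongr
    exact sq_norm_laurent_apply_le hc hc0 hw p
  rw [siteEnergy, mul_assoc]
  gcongr

theorem iterationDecays_of_norm_le_of_ne (hc : IsLaurentBound c B) (hc0 : c 0 = 0)
    (hDp : ‖D p‖ ≤ ε) (hD : ∀ l ≠ p, ‖D l‖ ≤ δ) (hεδ : (1 + (ε * B) ^ 2) * (δ * B) ^ 2 < 1) :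
    IterationDecays c D := by
  intro u hu hstep
  set A := (ε * B) ^ 2
  set s := (1 + A) * (δ * B) ^ 2
  have hA : 0 ≤ A := sq_nonneg _
  have hr : (s + A) / (1 + A) * (1 + A) = s + A := div_mul_cancel₀ _ (by positivity)
  have hsr : s ≤ (s + A) / (1 + A) := by
    rw [le_div_iff₀ (by positivity)]
    nlinarith
  refine tendsto_energy_of_le_mul (N := siteEnergy p (1 + A)) (r := (s + A) / (1 + A))
    (by positivity) (by rw [div_lt_one (by positivity)]; linarith)
    (fun m => energy_le_siteEnergy (by linarith) (summable_sq_norm (hu m))) fun m => ?_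
  set X := energy (Function.update (u m) p 0)
  calc siteEnergy p (1 + A) (u (m + 1)) ≤ s * energy (u m) + A * X := by
        rw [hstep]
        exact siteEnergy_mul_laurent_le hc hc0 hDp hD (by positivity) (hu m)
    _ = (s + A) * X + s * ‖u m p‖ ^ 2 := by
        rw [energy_eq_update_add (summable_sq_norm (hu m)) p]
        ring
    _ ≤ (s + A) * X + (s + A) / (1 + A) * ‖u m p‖ ^ 2 := by gcongr
    _ = (s + A) / (1 + A) * siteEnergy p (1 + A) (u m) := by
        rw [siteEnergy, mul_add, ← mul_assoc, hr]

theorem tendsto_tsum_pathTerm (hc : IsLaurentBound c B) (hB : 0 ≤ B) (hceven : c.Even)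
    (hD : Summable fun l => ‖D l‖) (hdecay : IterationDecays c D) {W : ℤ → ℂ} {K : ℝ}
    (hW : ∀ l, ‖W l‖ ≤ K) (j : ℤ) :
    Tendsto (fun m => ∑' v : Fin m → ℤ, pathTerm c D W j v) atTop (nhds 0) := by
  set u : ℕ → ℤ → ℂ := fun m => D * (fun w => laurent c (D * w))^[m] W
  have hsum := summable_norm_pathTerm (hc.norm_le hB) hD hW
  have hiter := tsum_pathTerm_eq_iterate (hc.norm_le hB) hceven hD hW
  have hu (m : ℕ) : Summable fun l => ‖u m l‖ := by
    refine .of_nonneg_of_le (fun _ => norm_nonneg _) (fun l => ?_)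
      (hD.mul_right ((B * ∑' l, ‖D l‖) ^ m * K))
    rw [show u m l = D l * ∑' v : Fin m → ℤ, pathTerm c D W l v by rw [hiter]; rfl, norm_mul]
    gcongr
    exact (norm_tsum_le_tsum_norm (hsum m l).1).trans (hsum m l).2
  have hstep (m : ℕ) : u (m + 1) = D * laurent c (u m) := by
    simp only [u, Function.iterate_succ_apply']
  have hsq (m : ℕ) : ‖∑' v : Fin (m + 1) → ℤ, pathTerm c D W j v‖ ^ 2 ≤ B ^ 2 * energy (u m) := by
    rw [hiter, Function.iterate_succ_apply']
    exact (sq_norm_le_energy (hc _ (hu m)).1 j).trans (hc _ (hu m)).2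
  have henergy := ((hdecay u hu hstep).const_mul (B ^ 2)).sqrt
  rw [mul_zero, Real.sqrt_zero] at henergy
  exact (tendsto_add_atTop_iff_nat 1).1
    (squeeze_zero_norm (fun m => Real.le_sqrt_of_sq_le (hsq m)) henergy)

end Contraction

section DirichletWeight

/-- The diagonal of the resolvent `(λ - l²)⁻¹` of the free operator, with the resonant sites `±n`
removed; this removal encodes the restriction to admissible multi-indices. -/
noncomputable def dirichletWeight (n : ℕ) (lam : ℂ) (l : ℤ) : ℂ :=
  if l = n ∨ l = -n then 0 else (lam - (l : ℂ) ^ 2)⁻¹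

variable {n : ℕ} {lam : ℂ} {M : ℝ}

theorem norm_dirichletWeight_le {e : ℝ} (hlam : ‖lam - (n : ℂ) ^ 2‖ ≤ M) (heM : M < e) {l : ℤ}
    (hl : l ≠ n → l ≠ -n → e ≤ |(l : ℝ) ^ 2 - (n : ℝ) ^ 2|) :
    ‖dirichletWeight n lam l‖ ≤ (e - M)⁻¹ := by
  rw [dirichletWeight]
  split_ifs with hres
  · rw [norm_zero]
    exact inv_nonneg.2 (sub_nonneg.2 heM.le)
  · obtain ⟨hl1, hl2⟩ := not_or.1 hres
    have hgap : e ≤ ‖(l : ℂ) ^ 2 - (n : ℂ) ^ 2‖ := by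
      refine (hl hl1 hl2).trans_eq ?_
      rw [← Real.norm_eq_abs, ← Complex.norm_real]
      push_cast
      rfl
    have htri := norm_sub_le_norm_sub_add_norm_sub ((l : ℂ) ^ 2) lam ((n : ℂ) ^ 2)
    rw [norm_sub_rev _ lam] at htri
    rw [norm_inv]
    exact inv_anti₀ (sub_pos.2 heM) (by linarith)

theorem two_mul_sub_one_le_abs_sq_sub_sq {l : ℤ} (hl : l ≠ n) (hl' : l ≠ -n) :
    2 * (n : ℝ) - 1 ≤ |(l : ℝ) ^ 2 - (n : ℝ) ^ 2| := by
  have habs : |l| ≠ n := fun h => (abs_eq (by positivity)).1 h |>.elim hl hl'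
  have hint : 2 * (n : ℤ) - 1 ≤ |l ^ 2 - (n : ℤ) ^ 2| := by
    rw [← sq_abs l]
    rcases habs.lt_or_gt with h | h
    · exact le_abs.2 (.inr (by nlinarith [abs_nonneg l]))
    · exact le_abs.2 (.inl (by nlinarith))
  exact_mod_cast hint

theorem three_le_abs_sq_sub_one {l : ℤ} (hl0 : l ≠ 0) (hl : l ≠ 1) (hl' : l ≠ -1) :
    3 ≤ |(l : ℝ) ^ 2 - 1| := by
  have habs : 2 ≤ |l| := le_abs.2 (by omega)
  have hint : 3 ≤ |l ^ 2 - 1| := le_abs.2 (.inl (by nlinarith [sq_abs l]))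
  exact_mod_cast hint

theorem summable_norm_dirichletWeight (n : ℕ) (lam : ℂ) :
    Summable fun l => ‖dirichletWeight n lam l‖ := by
  have hlittle : (fun _ : ℤ => lam) =o[cofinite] fun l : ℤ => (l : ℂ) ^ 2 := by
    refine isLittleO_const_left.2 (.inr ?_)
    simp only [Function.comp_def, norm_pow, Complex.norm_intCast]
    exact (tendsto_pow_atTop two_ne_zero).comp
      ((tendsto_norm_cocompact_atTop (E := ℝ)).comp Int.tendsto_coe_cofinite)
  have hinv : (fun l : ℤ => ((l : ℂ) ^ 2 - lam)⁻¹) =O[cofinite] fun l : ℤ => ((l : ℂ) ^ 2)⁻¹ :=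
    hlittle.right_isBigO_sub.inv_rev <| (eventually_cofinite_ne (0 : ℤ)).mono fun l hl h =>
      absurd h (pow_ne_zero 2 (Int.cast_ne_zero.2 hl))
  have hweight : dirichletWeight n lam =O[cofinite] fun l : ℤ => ((l : ℂ) ^ 2 - lam)⁻¹ :=
    .of_bound' (.of_forall fun l => by
      rw [dirichletWeight, norm_inv, norm_sub_rev]
      split_ifs <;> simp)
  have hsq : (fun l : ℤ => ((l : ℂ) ^ 2)⁻¹) =O[cofinite] fun l : ℤ => 1 / (l : ℝ) ^ 2 :=
    .of_bound' (.of_forall fun l => by simp)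
  exact (summable_of_isBigO (Real.summable_one_div_int_pow.2 one_lt_two)
    ((hweight.trans hinv).trans hsq).norm_left)

theorem iterationDecays_dirichletWeight {c : ℤ → ℂ} (hn : 1 ≤ n) (hcond : Cond1 M n)
    (hlam : ‖lam - (n : ℂ) ^ 2‖ ≤ M) (hc : IsLaurentBound c M) (hc0 : n = 1 → c 0 = 0) :
    IterationDecays c (dirichletWeight n lam) := by
  have hM : 0 ≤ M := (norm_nonneg _).trans hlam
  rcases hn.eq_or_lt with rfl | hn
  · have hM2 := hcond.1 rfl
    refine iterationDecays_of_norm_le_of_ne (p := 0) (ε := (1 - M)⁻¹) (δ := (3 - M)⁻¹) hc (hc0 rfl)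
      (norm_dirichletWeight_le hlam (by linarith) (by simp))
      (fun l hl => norm_dirichletWeight_le hlam (by linarith) fun h1 h2 => ?_) ?_
    · simpa using three_le_abs_sq_sub_one hl (by simpa using h1) (by simpa using h2)
    · have hε : (1 - M)⁻¹ * M ≤ 1 := by
        rw [inv_mul_le_iff₀ (by linarith)]; linarith
      have hδ : (3 - M)⁻¹ * M ≤ 1 / 5 := by
        rw [inv_mul_le_iff₀ (by linarith)]; linarith
      have hε0 : 0 ≤ (1 - M)⁻¹ * M := mul_nonneg (inv_nonneg.2 (by linarith)) hM
      have hδ0 : 0 ≤ (3 - M)⁻¹ * M := mul_nonneg (inv_nonneg.2 (by linarith)) hM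
      calc (1 + ((1 - M)⁻¹ * M) ^ 2) * ((3 - M)⁻¹ * M) ^ 2 ≤ (1 + 1 ^ 2) * (1 / 5) ^ 2 := by gcongr
        _ < 1 := by norm_num
  · have hM2 := hcond.2 hn
    refine iterationDecays_of_norm_le (δ := (2 * (n : ℝ) - 1 - M)⁻¹) hc (fun l =>
      norm_dirichletWeight_le hlam (by linarith) two_mul_sub_one_le_abs_sq_sub_sq) ?_
    have hpos : 0 < 2 * (n : ℝ) - 1 - M := by linarith
    refine pow_lt_one₀ (by positivity) ?_ two_ne_zero
    rw [inv_mul_lt_iff₀ hpos]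
    linarith

end DirichletWeight

section Remainder

/-- The sine moment `∫₀^π q Ψ sin(lx) dx`, the endpoint factor of the terms of `R_m`. -/
noncomputable def sineMoment (q : ℝ → ℝ) (Psi : ℝ → ℂ) (l : ℤ) : ℂ :=
  ∫ x in (0 : ℝ)..Real.pi, (q x : ℂ) * Psi x * (Real.sin (l * x) : ℂ)

variable {q : ℝ → ℝ} {Psi : ℝ → ℂ}

theorem norm_sineMoment_le
    (hqPsi : IntervalIntegrable (fun x => (q x : ℂ) * Psi x) volume 0 Real.pi) (l : ℤ) :
    ‖sineMoment q Psi l‖ ≤ ∫ x in (0 : ℝ)..Real.pi, ‖(q x : ℂ) * Psi x‖ := by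
  refine intervalIntegral.norm_integral_le_of_norm_le Real.pi_pos.le (.of_forall fun x _ => ?_)
    hqPsi.norm
  rw [norm_mul, Complex.norm_real, Real.norm_eq_abs]
  exact mul_le_of_le_one_right (norm_nonneg _) (Real.abs_sin_le_one _)

theorem Rterm_eq_pathTerm (C : ℤ → ℝ) (n : ℕ) (lam : ℂ) {m : ℕ} (v : Fin m → ℤ) :
    Rterm C q Psi n lam m v =
      pathTerm (fun k => (C k : ℂ)) (dirichletWeight n lam) (sineMoment q Psi) n v := by
  have hsite (s : ℤ) : ((n : ℤ) + s = n ∨ (n : ℤ) + s = -n) ↔ ¬(s ≠ 0 ∧ s ≠ -(2 * (n : ℤ))) := by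
    omega
  rw [Rterm, pathTerm, Finset.prod_mul_distrib]
  split_ifs with hadm
  · have hweight (i : Fin m) : dirichletWeight n lam (n + psum v i) =
        (lam - ((n : ℂ) + ((psum v i : ℤ) : ℂ)) ^ 2)⁻¹ := by
      rw [dirichletWeight, if_neg (by rw [hsite, not_not]; exact hadm i)]
      push_cast
      rfl
    simp only [hweight, Finset.prod_inv_distrib, sineMoment]
    push_cast
    ring
  · obtain ⟨i, hi⟩ := not_forall.1 hadm
    have hzero : ∏ i, dirichletWeight n lam (n + psum v i) = 0 :=
      Finset.prod_eq_zero (Finset.mem_univ i) (if_pos ((hsite _).2 hi))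
    rw [hzero, mul_zero, zero_mul]

theorem stmt11_general {M : ℝ} {n : ℕ} {lam : ℂ} (hq : IntervalIntegrable q volume 0 Real.pi)
    (hqM : ∀ᵐ x ∂volume.restrict (Set.Ioc 0 Real.pi), |q x| ≤ M)
    (hn : 1 ≤ n) (hcond : Cond1 M n) (hmean : n = 1 → ∫ x in (0 : ℝ)..Real.pi, q x = 0)
    (hlam : ‖lam - (n : ℂ) ^ 2‖ ≤ M)
    (hqPsi : IntervalIntegrable (fun x => (q x : ℂ) * Psi x) volume 0 Real.pi) :
    Tendsto (fun m => Rsum (cosCoefR q) q Psi n lam m) atTop (nhds 0) := by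
  have hbound := isLaurentBound_cosCoefR hq hqM
  have hdecay : IterationDecays (fun k => (cosCoefR q k : ℂ)) (dirichletWeight n lam) :=
    iterationDecays_dirichletWeight hn hcond hlam hbound fun h => by
      rw [cosCoefR_zero, hmean h, mul_zero, Complex.ofReal_zero]
  simp only [Rsum, Rterm_eq_pathTerm]
  exact tendsto_tsum_pathTerm hbound ((norm_nonneg _).trans hlam)
    (fun k => congrArg Complex.ofReal (cosCoefR_even q k)) (summable_norm_dirichletWeight n lam)
    hdecay (norm_sineMoment_le hqPsi) n

end Remainder

section KronigPenney

theorem IsDirichletEigenpair.continuousOn {q : ℝ → ℂ} {lam : ℂ} {y : ℝ → ℂ}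
    (hy : IsDirichletEigenpair q lam y) : ContinuousOn y (Set.Icc 0 Real.pi) := by
  obtain ⟨g, -, hg, -, hy_eq, -⟩ := hy
  have hprim := intervalIntegral.continuousOn_primitive_interval
    ((intervalIntegrable_iff_integrableOn_Icc_of_le Real.pi_pos.le).1 hg |>.mono_set (by
      rw [Set.uIcc_of_le Real.pi_pos.le]))
  rw [Set.uIcc_of_le Real.pi_pos.le] at hprim
  exact (continuousOn_const.add hprim).congr hy_eq

variable {a b c : ℝ} {q : ℝ → ℝ}

theorem ae_abs_kronigPenney_le (hb : 0 < b) (hqa : ∀ x ∈ Set.Icc (0 : ℝ) c, q x = a)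
    (hqb : ∀ x ∈ Set.Ioc c Real.pi, q x = b) :
    ∀ᵐ x ∂volume.restrict (Set.Ioc 0 Real.pi), |q x| ≤ max |a| b := by
  filter_upwards [ae_restrict_mem measurableSet_Ioc] with x hx
  rcases le_or_gt x c with hxc | hxc
  · rw [hqa x ⟨hx.1.le, hxc⟩]
    exact le_max_left _ _
  · rw [hqb x ⟨hxc, hx.2⟩, abs_of_pos hb]
    exact le_max_right _ _

theorem integral_kronigPenney (hc : c ∈ Set.Ioo 0 Real.pi)
    (hqa : ∀ x ∈ Set.Icc (0 : ℝ) c, q x = a) (hqb : ∀ x ∈ Set.Ioc c Real.pi, q x = b) :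
    IntervalIntegrable q volume 0 Real.pi ∧
      ∫ x in (0 : ℝ)..Real.pi, q x = a * c + b * (Real.pi - c) := by
  have hleft : Set.EqOn q (fun _ => a) (Set.uIoc 0 c) := fun x hx => by
    rw [Set.uIoc_of_le hc.1.le] at hx
    exact hqa x (Set.Ioc_subset_Icc_self hx)
  have hright : Set.EqOn q (fun _ => b) (Set.uIoc c Real.pi) := fun x hx => by
    rw [Set.uIoc_of_le hc.2.le] at hx
    exact hqb x hx
  have hint_left : IntervalIntegrable q volume 0 c := intervalIntegrable_const.congr hleft.symm
  have hint_right : IntervalIntegrable q volume c Real.pi :=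
    intervalIntegrable_const.congr hright.symm
  refine ⟨hint_left.trans hint_right, ?_⟩
  rw [← intervalIntegral.integral_add_adjacent_intervals hint_left hint_right,
    intervalIntegral.integral_congr_ae (.of_forall fun _ hx => hleft hx),
    intervalIntegral.integral_congr_ae (.of_forall fun _ hx => hright hx),
    intervalIntegral.integral_const, intervalIntegral.integral_const]
  simp only [smul_eq_mul, sub_zero]
  ring

end KronigPenney

/-- For the Kronig–Penney potential, `n ≥ 1` satisfying Condition 1,
a Dirichlet eigenvalue `λ_n` with `|λ_n − n²| ≤ M` and a corresponding normalized
eigenfunction `Ψ_n`, one has `R_m(λ_n) → 0` as `m → ∞`. -/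
theorem stmt11
    (a b c : ℝ) (q : ℝ → ℝ)
    (hc : c ∈ Set.Ioo (0:ℝ) Real.pi) (ha : a < 0) (hb : 0 < b)
    (habc : (b - a) * c = b * Real.pi)
    (hqa : ∀ x ∈ Set.Icc (0:ℝ) c, q x = a)
    (hqb : ∀ x ∈ Set.Ioc c Real.pi, q x = b)
    (n : ℕ) (hn : 1 ≤ n) (hcond : Cond1 (max |a| b) n)
    (lam : ℂ) (Psi : ℝ → ℂ)
    (hev : IsDirichletEigenpair (fun x => (q x : ℂ)) lam Psi)
    (hbd : ‖lam - ((n : ℂ))^2‖ ≤ max |a| b)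
    (hnorm : (∫ x in (0:ℝ)..Real.pi, ‖Psi x‖^2) = 1) :
    Tendsto (fun m : ℕ => Rsum (cosCoefR q) q Psi n lam (m + 1)) atTop (nhds 0) := by
  obtain ⟨hq, hmean⟩ := integral_kronigPenney hc hqa hqb
  exact (stmt11_general hq (ae_abs_kronigPenney_le hb hqa hqb) hn hcond
    (fun _ => by rw [hmean]; linear_combination -habc) hbd
    ((intervalIntegrable_ofReal hq).mul_continuousOn (by
      rw [Set.uIcc_of_le Real.pi_pos.le]; exact hev.continuousOn))).comp (tendsto_add_atTop_nat 1)
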